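/- arXiv:1909.05807 — 6 statements merged into one kernel-verified Lean document; each statement's English description precedes it below -/
import Mathlib

section
/- Let X be a nonempty set and x₀ ∈ X. Let F be the free group on the set X \ {x₀}, regarded as a heap with operation [g,h,k] = g h⁻¹ k, and let ι : X → F send x₀ to the identity element and each y ≠ x₀ to the corresponding generator of F. Then (F, ι) is the free heap on X: for every heap H and every function φ : X → H there exists a unique map ψ : F → H satisfying ψ(g h⁻¹ k) = [ψ(g), ψ(h), ψ(k)] for all g,h,k ∈ F and ψ ∘ ι = φ. -/
/-- A ternary operation is a heap operation if it is associative and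
satisfies the Mal'cev identities. -/
def IsHeap {H : Type*} (op : H → H → H → H) : Prop :=
  (∀ a b c d e : H, op (op a b c) d e = op a b (op c d e)) ∧
  (∀ a b : H, op a b b = a) ∧ (∀ a b : H, op b b a = a)

/-!
A choice of base point `e` in a heap turns it into a group with `a * b = [a, e, b]`, whose heap is
the heap one started from. Heap morphisms between groups that preserve `1` are group homomorphisms,
so heap morphisms `ψ` out of `F` with `ψ 1 = φ x₀` are the group homomorphisms into `H` based at
`φ x₀`, and these are determined by arbitrary values on the generators.
-/

/-- The operation of the heap `H(G)` of a group `G`. -/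
def groupHeapOp {G : Type*} [Group G] (g h k : G) : G :=
  g * h⁻¹ * k

/-- Heap morphisms, as a predicate on maps between types with ternary operations, because `IsHeap`
is itself unbundled. -/
def IsHeapHom {H K : Type*} (op : H → H → H → H) (op' : K → K → K → K) (ψ : H → K) : Prop :=
  ∀ a b c : H, ψ (op a b c) = op' (ψ a) (ψ b) (ψ c)

namespace IsHeap

variable {H : Type*} {op : H → H → H → H}

theorem op_assoc (hH : IsHeap op) (a b c d e : H) : op (op a b c) d e = op a b (op c d e) :=
  hH.1 a b c d e

theorem op_self_right (hH : IsHeap op) (a b : H) : op a b b = a :=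
  hH.2.1 a b

theorem op_self_left (hH : IsHeap op) (a b : H) : op b b a = a :=
  hH.2.2 a b

/-- The retract of a heap at a base point `e`: the group on `H` with identity `e` and
multiplication `a * b = [a, e, b]`. -/
abbrev retract (hH : IsHeap op) (e : H) : Group H :=
  letI : Mul H := ⟨fun a b ↦ op a e b⟩
  letI : Inv H := ⟨fun a ↦ op e a e⟩
  letI : One H := ⟨e⟩
  Group.ofLeftAxioms
    (fun a b c ↦ hH.op_assoc a e b e c)
    (fun a ↦ hH.op_self_left a e)
    (fun a ↦ calc
      op (op e a e) e a = op e a (op e e a) := hH.op_assoc e a e e a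
      _ = op e a a := by rw [hH.op_self_left]
      _ = e := hH.op_self_right e a)

theorem groupHeapOp_retract (hH : IsHeap op) (e : H) :
    letI := hH.retract e
    groupHeapOp = op := by
  funext a b c
  calc
    op (op a e (op e b e)) e c = op (op (op a e e) b e) e c := by rw [hH.op_assoc a e e b e]
    _ = op (op a b e) e c := by rw [hH.op_self_right]
    _ = op a b (op e e c) := hH.op_assoc a b e e c
    _ = op a b c := by rw [hH.op_self_left]

end IsHeap

theorem isHeapHom_groupHeapOp_and_map_one_iff {G K : Type*} [Group G] [Group K] {ψ : G → K} :
    IsHeapHom groupHeapOp groupHeapOp ψ ∧ ψ 1 = 1 ↔ ∃ f : G →* K, ⇑f = ψ := by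
  constructor
  · rintro ⟨hψ, hψ_one⟩
    have map_mul (a b : G) : ψ (a * b) = ψ a * ψ b := by
      simpa [groupHeapOp, hψ_one] using hψ a 1 b
    exact ⟨MonoidHom.mk' ψ map_mul, rfl⟩
  · rintro ⟨f, rfl⟩
    exact ⟨fun a b c ↦ by simp [groupHeapOp], map_one f⟩

theorem existsUnique_isHeapHom_freeGroup_of_group {α K : Type*} [Group K] (v : α → K) :
    ∃! ψ : FreeGroup α → K,
      IsHeapHom groupHeapOp groupHeapOp ψ ∧ ψ 1 = 1 ∧ ∀ a, ψ (FreeGroup.of a) = v a := by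
  simp only [← and_assoc, isHeapHom_groupHeapOp_and_map_one_iff]
  refine ⟨FreeGroup.lift v, ⟨⟨_, rfl⟩, fun _ ↦ FreeGroup.lift_apply_of⟩, ?_⟩
  rintro _ ⟨⟨f, rfl⟩, hf⟩
  exact funext fun _ ↦ FreeGroup.lift_unique f hf

theorem IsHeap.existsUnique_isHeapHom_freeGroup {α H : Type*} {op : H → H → H → H}
    (hH : IsHeap op) (e : H) (v : α → H) :
    ∃! ψ : FreeGroup α → H,
      IsHeapHom groupHeapOp op ψ ∧ ψ 1 = e ∧ ∀ a, ψ (FreeGroup.of a) = v a := by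
  let := hH.retract e
  have one_eq : (1 : H) = e := rfl
  simpa only [hH.groupHeapOp_retract e, one_eq] using existsUnique_isHeapHom_freeGroup_of_group v

theorem forall_apply_dite_eq_iff {X : Type*} (x₀ : X) [DecidablePred (· = x₀)]
    {F H : Type*} (b : F) (u : {y : X // y ≠ x₀} → F) (ψ : F → H) (φ : X → H) :
    (∀ x : X, ψ (if h : x = x₀ then b else u ⟨x, h⟩) = φ x) ↔
      ψ b = φ x₀ ∧ ∀ y, ψ (u y) = φ y := by
  constructor
  · intro h
    exact ⟨by simpa using h x₀, fun y ↦ by simpa [y.2] using h y⟩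
  · rintro ⟨h_base, h_ne⟩ x
    by_cases hx : x = x₀
    · simpa [hx] using h_base
    · simpa [hx] using h_ne ⟨x, hx⟩

theorem free_heap_is_heap_of_free_group_general {X H : Type*} (x₀ : X) [DecidablePred (· = x₀)]
    {op : H → H → H → H} (hH : IsHeap op) (φ : X → H) :
    ∃! ψ : FreeGroup {y : X // y ≠ x₀} → H,
      (∀ g h k : FreeGroup {y : X // y ≠ x₀},
        ψ (g * h⁻¹ * k) = op (ψ g) (ψ h) (ψ k)) ∧
      (∀ x : X, ψ (if h : x = x₀ then 1 else FreeGroup.of ⟨x, h⟩) = φ x) := by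
  simp only [forall_apply_dite_eq_iff x₀ 1 FreeGroup.of]
  exact hH.existsUnique_isHeapHom_freeGroup (φ x₀) fun y : {y : X // y ≠ x₀} ↦ φ y

/-- Let `X` be a nonempty set and `x₀ ∈ X`.  Let `F` be the
free group on `X \ {x₀}`, regarded as a heap with `[g,h,k] = g h⁻¹ k`, and let
`ι : X → F` send `x₀` to the identity and each `y ≠ x₀` to the corresponding
generator.  Then `(F, ι)` is the free heap on `X`: for every heap `H` and every
function `φ : X → H` there is a unique map `ψ : F → H` preserving the heap
operation with `ψ ∘ ι = φ`. -/
theorem free_heap_is_heap_of_free_group {X : Type} [DecidableEq X] (x₀ : X)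
    (H : Type) (op : H → H → H → H) (hH : IsHeap op) (φ : X → H) :
    ∃! ψ : FreeGroup {y : X // y ≠ x₀} → H,
      (∀ g h k : FreeGroup {y : X // y ≠ x₀},
        ψ (g * h⁻¹ * k) = op (ψ g) (ψ h) (ψ k)) ∧
      (∀ x : X, ψ (if h : x = x₀ then 1 else FreeGroup.of ⟨x, h⟩) = φ x) :=
  free_heap_is_heap_of_free_group_general x₀ hH φ
end

section
/- Let F be a free group and let S be a nonempty subset of F closed under the operation (s,t,u) ↦ s t⁻¹ u, and let e ∈ S. Then the group G(S;e), namely S with product s · t = s e⁻¹ t, neutral element e and inverse s⁻¹ = e s⁻¹ e, is a free group. -/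
/-!
Right translation by `e⁻¹` carries the product `s e⁻¹ t` to the product of the ambient group, so it
identifies the retract `G(S;e)` with the subgroup `S e⁻¹`, to which the Nielsen–Schreier theorem
applies.
-/

universe u

/-- A sub-heap of the heap `H(G)`: a subset of `G` closed under `[r, s, t] = r s⁻¹ t`.
The empty set is allowed; nonemptiness enters through the choice of a base point. -/
structure Subheap (G : Type u) [Group G] where
  carrier : Set G
  bracket_mem' : ∀ {r s t : G}, r ∈ carrier → s ∈ carrier → t ∈ carrier → r * s⁻¹ * t ∈ carrier

namespace Subheap

variable {G : Type u} [Group G]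

instance : SetLike (Subheap G) G where
  coe := carrier
  coe_injective S T h := by cases S; congr

variable (S : Subheap G)

/-- The heap operation `[r, s, t] = r s⁻¹ t` restricted to a sub-heap. -/
def bracket (r s t : S) : S :=
  ⟨r * (s : G)⁻¹ * t, S.bracket_mem' r.2 s.2 t.2⟩

theorem coe_bracket (r s t : S) : (S.bracket r s t : G) = r * (s : G)⁻¹ * t :=
  rfl

theorem bracket_self_left (s t : S) : S.bracket s s t = t :=
  Subtype.ext <| by rw [coe_bracket, mul_inv_cancel, one_mul]

theorem bracket_self_right (s t : S) : S.bracket s t t = s :=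
  Subtype.ext <| inv_mul_cancel_right _ _

theorem bracket_assoc (p q r s t : S) :
    S.bracket (S.bracket p q r) s t = S.bracket p q (S.bracket r s t) :=
  Subtype.ext <| by simp only [coe_bracket, mul_assoc]

theorem bracket_bracket_cancel (e s : S) : S.bracket (S.bracket e s e) e s = e := by
  rw [bracket_assoc, bracket_self_left, bracket_self_right]

/-- The retract `G(S;e)`: a copy of `S` carrying the group structure with product `s e⁻¹ t`,
neutral element `e` and inverse `e s⁻¹ e`. It is a type synonym because the group structure depends
on the base point `e`. -/
def Retract (_e : S) : Type u :=
  S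

variable (e : S)

instance : Group (S.Retract e) where
  mul s t := S.bracket s e t
  one := e
  inv s := S.bracket e s e
  mul_assoc r s t := S.bracket_assoc r e s e t
  one_mul := S.bracket_self_left e
  mul_one s := S.bracket_self_right s e
  inv_mul_cancel := S.bracket_bracket_cancel e

/-- The right translate `S e⁻¹` of a sub-heap by one of its points, which is a subgroup of `G`. -/
def rightTranslate : Subgroup G where
  carrier := {g | g * e ∈ S}
  mul_mem' {a b} ha hb := by
    have h : a * e * (e : G)⁻¹ * (b * e) ∈ S := S.bracket_mem' ha e.2 hb
    rwa [mul_inv_cancel_right, ← mul_assoc] at h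
  one_mem' := by
    rw [Set.mem_ofPred_eq, one_mul]
    exact e.2
  inv_mem' {a} ha := by
    have h : (e : G) * (a * e)⁻¹ * e ∈ S := S.bracket_mem' e.2 ha e.2
    rwa [mul_inv_rev, mul_inv_cancel_left] at h

theorem mem_rightTranslate {g : G} : g ∈ S.rightTranslate e ↔ g * e ∈ S :=
  Iff.rfl

theorem mul_inv_mem_rightTranslate (s : S) : (s : G) * (e : G)⁻¹ ∈ S.rightTranslate e := by
  rw [mem_rightTranslate, inv_mul_cancel_right]
  exact s.2

/-- Right translation by `e⁻¹`, as an isomorphism from the retract `G(S;e)` onto the subgroup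
`S e⁻¹`. -/
def retractMulEquiv : S.Retract e ≃* S.rightTranslate e where
  toFun (s : S) := ⟨s * (e : G)⁻¹, S.mul_inv_mem_rightTranslate e s⟩
  invFun g := (⟨g * e, g.2⟩ : S)
  left_inv (s : S) := Subtype.ext <| inv_mul_cancel_right (s : G) e
  right_inv g := Subtype.ext <| mul_inv_cancel_right (g : G) e
  map_mul' (s t : S) := Subtype.ext <| mul_assoc (s * (e : G)⁻¹) (t : G) (e : G)⁻¹

end Subheap

theorem subheap_retract_of_free_group_is_free_general {G : Type u} [Group G] [IsFreeGroup G]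
    (S : Subheap G) (e : S) : IsFreeGroup (S.Retract e) :=
  IsFreeGroup.ofMulEquiv (S.retractMulEquiv e).symm

/-- Let `F` be a free group and `S ⊆ F` a nonempty subset
closed under `(s,t,u) ↦ s t⁻¹ u` (i.e. a sub-heap of the heap associated to
`F`), and let `e ∈ S`.  Then the retract group `G(S;e)`, namely `S` with the
product `s · t = s e⁻¹ t`, is a free group. -/
theorem subheap_retract_of_free_group_is_free {α : Type} (S : Set (FreeGroup α))
    (hne : S.Nonempty)
    (hcl : ∀ s ∈ S, ∀ t ∈ S, ∀ u ∈ S, s * t⁻¹ * u ∈ S)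
    (e : FreeGroup α) (he : e ∈ S) :
    ∃ (β : Type) (φ : S → FreeGroup β), Function.Bijective φ ∧
      ∀ (s t : S) (h : (s : FreeGroup α) * e⁻¹ * (t : FreeGroup α) ∈ S),
        φ ⟨(s : FreeGroup α) * e⁻¹ * (t : FreeGroup α), h⟩ = φ s * φ t := by
  let T : Subheap (FreeGroup α) := ⟨S, fun hr hs ht => hcl _ hr _ hs _ ht⟩
  have : IsFreeGroup (T.Retract ⟨e, he⟩) := subheap_retract_of_free_group_is_free_general T ⟨e, he⟩
  let φ := IsFreeGroup.toFreeGroup (T.Retract ⟨e, he⟩)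
  exact ⟨_, φ, φ.bijective, fun s t _ => φ.map_mul s t⟩
end

section
/- For every truss T there exist a unital truss U and an injective map j : T → U preserving the ternary operation and the multiplication (i.e., j([t,t',t'']) = [j(t), j(t'), j(t'')] and j(t t') = j(t) j(t')), such that the identity element 1 of U does not lie in the image of j and U is generated as a heap by j(T) ∪ {1}. -/
/-- An Abelian heap is a heap whose ternary operation satisfies
`[a,b,c] = [c,b,a]`. -/
def IsAbelianHeap {H : Type*} (op : H → H → H → H) : Prop :=
  IsHeap op ∧ ∀ a b c : H, op a b c = op c b a

/-- A truss is an Abelian heap with an associative multiplication that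
distributes over the ternary operation on both sides. -/
def IsTruss {T : Type*} (op : T → T → T → T) (mul : T → T → T) : Prop :=
  IsAbelianHeap op ∧
  (∀ a b c : T, mul (mul a b) c = mul a (mul b c)) ∧
  (∀ s a b c : T, mul s (op a b c) = op (mul s a) (mul s b) (mul s c)) ∧
  (∀ s a b c : T, mul (op a b c) s = op (mul a s) (mul b s) (mul c s))

/-!
Every truss `T` has a faithful left regular representation. Let `E` be the abelian group freely
generated by the heap `T`. Left distributivity lets `s : T` act additively on `E`, and adjoining a
free generator `1` to `E` gives additive endomorphisms `L s` of `E ⊕ ℤ 1` with `L s 1 = s`. Right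
distributivity and associativity say that `L` preserves the heap operation and the product, and
evaluation at `1` shows that `L` is injective and avoids the identity. The sub-heap of the
endomorphism ring generated by the identity and the image of `L` is the unital extension.
-/

section Heaps

variable {H : Type*} {op : H → H → H → H}

theorem isAbelianHeap_sub_add (A : Type*) [AddCommGroup A] :
    IsAbelianHeap (fun a b c : A => a - b + c) := by
  refine ⟨⟨?_, ?_, ?_⟩, ?_⟩ <;> intros <;> dsimp only <;> abel

/-- The sub-heap generated by `S`, for a ternary operation `op`. -/
inductive HeapClosure (op : H → H → H → H) (S : Set H) : H → Prop
  | of_mem {x : H} (hx : x ∈ S) : HeapClosure op S x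
  | op_mem {x y z : H} (hx : HeapClosure op S x) (hy : HeapClosure op S y)
      (hz : HeapClosure op S z) : HeapClosure op S (op x y z)

theorem HeapClosure.eq_univ_of_closed {S : Set H} {V : Set {x // HeapClosure op S x}}
    (hS : ∀ x (hx : x ∈ S), ⟨x, of_mem hx⟩ ∈ V)
    (hop : ∀ a ∈ V, ∀ b ∈ V, ∀ c ∈ V, ⟨op a b c, op_mem a.2 b.2 c.2⟩ ∈ V) :
    V = Set.univ := by
  refine Set.eq_univ_of_forall fun ⟨x, hx⟩ => ?_
  induction hx with
  | of_mem hx => exact hS _ hx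
  | op_mem _ _ _ ihx ihy ihz => exact hop _ ihx _ ihy _ ihz

/-- Choosing a base point `e` turns an abelian heap into a group with zero `e` and
addition `[a, e, b]`. -/
theorem IsAbelianHeap.exists_addCommGroup [Nonempty H] (h : IsAbelianHeap op) :
    ∃ _ : AddCommGroup H, ∀ a b c : H, op a b c = a - b + c := by
  obtain ⟨⟨assoc, right_cancel, left_cancel⟩, comm⟩ := h
  obtain ⟨e⟩ := ‹Nonempty H›
  let _ : Add H := ⟨fun a b => op a e b⟩
  let _ : Zero H := ⟨e⟩
  let _ : Neg H := ⟨fun a => op e a e⟩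
  let group : AddGroup H := .ofLeftAxioms (fun a b c => assoc a e b e c)
    (fun a => left_cancel a e) fun a => show op (op e a e) e a = e by
      rw [assoc, left_cancel, right_cancel]
  refine ⟨{ group with add_comm := fun a b => comm a e b }, fun a b c => ?_⟩
  calc op a b c = op (op a b e) e c := by rw [assoc, left_cancel]
    _ = op (op a e (op e b e)) e c := by rw [← assoc a e e b e, right_cancel]
    _ = a - b + c := by rw [sub_eq_add_neg]; rfl

end Heaps

/-- The universal abelian group of a heap: heap morphisms from `H` to an abelian group, with
operation `a - b + c`, are the same as additive maps out of `HeapEnvelope op`. -/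
def HeapEnvelope {H : Type*} (op : H → H → H → H) : Type _ :=
  FreeAbelianGroup H ⧸ AddSubgroup.closure
    {x | ∃ a b c : H, x = .of (op a b c) - (.of a - .of b + .of c)}

namespace HeapEnvelope

variable {H A : Type*} [AddCommGroup A]

instance (op : H → H → H → H) : AddCommGroup (HeapEnvelope op) :=
  inferInstanceAs (AddCommGroup (FreeAbelianGroup H ⧸ _))

/-- The universal heap morphism from a heap to an abelian group. -/
def of (op : H → H → H → H) (a : H) : HeapEnvelope op :=
  QuotientAddGroup.mk (FreeAbelianGroup.of a)

variable {op : H → H → H → H}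

theorem of_op (a b c : H) : of op (op a b c) = of op a - of op b + of op c :=
  QuotientAddGroup.eq_iff_sub_mem.mpr (AddSubgroup.subset_closure ⟨a, b, c, rfl⟩)

/-- The additive map induced by a heap morphism into an abelian group. -/
def lift (f : H → A) (hf : ∀ a b c, f (op a b c) = f a - f b + f c) : HeapEnvelope op →+ A :=
  QuotientAddGroup.lift _ (FreeAbelianGroup.lift f) <| by
    rw [AddSubgroup.closure_le]
    rintro _ ⟨a, b, c, rfl⟩
    simp [hf]

@[simp]
theorem lift_of (f : H → A) (hf : ∀ a b c, f (op a b c) = f a - f b + f c) (a : H) :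
    lift f hf (of op a) = f a :=
  FreeAbelianGroup.lift_apply_of f a

theorem hom_ext {f g : HeapEnvelope op →+ A} (h : ∀ a, f (of op a) = g (of op a)) : f = g :=
  QuotientAddGroup.addMonoidHom_ext _ (FreeAbelianGroup.lift_ext _ _ h)

theorem of_injective (h : IsAbelianHeap op) : Function.Injective (of op) := by
  intro a b hab
  have : Nonempty H := ⟨a⟩
  obtain ⟨_, hop⟩ := h.exists_addCommGroup
  simpa only [lift_of, id] using congrArg (lift id hop) hab

end HeapEnvelope

section Trusses

variable {T : Type*} {op : T → T → T → T} {mul : T → T → T}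

theorem isTruss_of_nonUnitalRing (R : Type*) [NonUnitalRing R] :
    IsTruss (fun a b c : R => a - b + c) (· * ·) :=
  ⟨isAbelianHeap_sub_add R, mul_assoc,
    fun s a b c => by simp only [mul_add, mul_sub],
    fun s a b c => by simp only [add_mul, sub_mul]⟩

theorem IsTruss.of_injective {T' : Type*} {op' : T' → T' → T' → T'} {mul' : T' → T' → T'}
    (hT : IsTruss op mul) {f : T' → T} (hf : Function.Injective f)
    (map_op : ∀ a b c, f (op' a b c) = op (f a) (f b) (f c))
    (map_mul : ∀ a b, f (mul' a b) = mul (f a) (f b)) : IsTruss op' mul' := by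
  obtain ⟨⟨⟨assoc, right_cancel, left_cancel⟩, comm⟩, mul_assoc, left_distrib, right_distrib⟩ := hT
  refine ⟨⟨⟨fun a b c d e => hf ?_, fun a b => hf ?_, fun a b => hf ?_⟩, fun a b c => hf ?_⟩,
    fun a b c => hf ?_, fun s a b c => hf ?_, fun s a b c => hf ?_⟩ <;>
    simp only [map_op, map_mul]
  exacts [assoc .., right_cancel .., left_cancel .., comm .., mul_assoc .., left_distrib ..,
    right_distrib ..]

protected theorem IsTruss.mul_assoc (hT : IsTruss op mul) (a b c : T) :
    mul (mul a b) c = mul a (mul b c) :=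
  hT.2.1 a b c

theorem IsTruss.mul_op (hT : IsTruss op mul) (s a b c : T) :
    mul s (op a b c) = op (mul s a) (mul s b) (mul s c) :=
  hT.2.2.1 s a b c

theorem IsTruss.op_mul (hT : IsTruss op mul) (s a b c : T) :
    mul (op a b c) s = op (mul a s) (mul b s) (mul c s) :=
  hT.2.2.2 s a b c

theorem HeapClosure.mul_mem (hT : IsTruss op mul) {S : Set T}
    (hS : ∀ x ∈ S, ∀ y ∈ S, mul x y ∈ S) {x y : T} (hx : HeapClosure op S x)
    (hy : HeapClosure op S y) : HeapClosure op S (mul x y) := by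
  induction hx with
  | of_mem hx =>
    induction hy with
    | of_mem hy => exact of_mem (hS _ hx _ hy)
    | op_mem _ _ _ iha ihb ihc => rw [hT.mul_op]; exact op_mem iha ihb ihc
  | op_mem _ _ _ iha ihb ihc => rw [hT.op_mul]; exact op_mem iha ihb ihc

namespace IsTruss

variable (hT : IsTruss op mul)

/-- Left multiplication by an element of a truss, extended additively to the envelope of its
heap. -/
def envelopeMulLeft (s : T) : HeapEnvelope op →+ HeapEnvelope op :=
  HeapEnvelope.lift (fun t => HeapEnvelope.of op (mul s t)) fun a b c => by
    rw [hT.mul_op, HeapEnvelope.of_op]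

@[simp]
theorem envelopeMulLeft_of (s t : T) :
    hT.envelopeMulLeft s (HeapEnvelope.of op t) = HeapEnvelope.of op (mul s t) :=
  HeapEnvelope.lift_of ..

theorem envelopeMulLeft_op (a b c : T) :
    hT.envelopeMulLeft (op a b c) =
      hT.envelopeMulLeft a - hT.envelopeMulLeft b + hT.envelopeMulLeft c :=
  HeapEnvelope.hom_ext fun t => by
    simp only [envelopeMulLeft_of, AddMonoidHom.add_apply, AddMonoidHom.sub_apply, hT.op_mul,
      HeapEnvelope.of_op]

theorem envelopeMulLeft_mul (a b : T) :
    hT.envelopeMulLeft (mul a b) = (hT.envelopeMulLeft a).comp (hT.envelopeMulLeft b) :=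
  HeapEnvelope.hom_ext fun t => by
    simp only [envelopeMulLeft_of, AddMonoidHom.comp_apply, hT.mul_assoc]

/-- The left regular representation of a truss. The summand `ℤ` stands for the multiples of an
adjoined identity, so that `(0, 1)` is sent to `(s, 0)` by `s`. -/
def leftRegular (s : T) : AddMonoid.End (HeapEnvelope op × ℤ) :=
  (AddMonoidHom.inl _ _).comp
    ((hT.envelopeMulLeft s).coprod (zmultiplesHom _ (HeapEnvelope.of op s)))

@[simp]
theorem leftRegular_apply (s : T) (x : HeapEnvelope op × ℤ) :
    hT.leftRegular s x = (hT.envelopeMulLeft s x.1 + x.2 • HeapEnvelope.of op s, 0) :=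
  rfl

theorem leftRegular_op (a b c : T) :
    hT.leftRegular (op a b c) = hT.leftRegular a - hT.leftRegular b + hT.leftRegular c := by
  refine AddMonoidHom.ext fun x => Prod.ext ?_ rfl
  change hT.envelopeMulLeft (op a b c) x.1 + x.2 • HeapEnvelope.of op (op a b c) =
    (hT.envelopeMulLeft a x.1 + x.2 • HeapEnvelope.of op a) -
      (hT.envelopeMulLeft b x.1 + x.2 • HeapEnvelope.of op b) +
      (hT.envelopeMulLeft c x.1 + x.2 • HeapEnvelope.of op c)
  simp only [envelopeMulLeft_op, HeapEnvelope.of_op, AddMonoidHom.add_apply,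
    AddMonoidHom.sub_apply]
  module

theorem leftRegular_mul (a b : T) :
    hT.leftRegular (mul a b) = hT.leftRegular a * hT.leftRegular b :=
  DFunLike.ext _ _ fun x => by simp [envelopeMulLeft_mul]

theorem leftRegular_injective : Function.Injective hT.leftRegular := fun a b hab =>
  HeapEnvelope.of_injective hT.1 <| by simpa using DFunLike.congr_fun hab (0, 1)

theorem one_notMem_range_leftRegular : 1 ∉ Set.range hT.leftRegular := by
  rintro ⟨s, hs⟩
  have h : (0 : ℤ) = 1 := congrArg Prod.snd (DFunLike.congr_fun hs (0, 1))
  exact zero_ne_one h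

theorem mul_mem_insert_one_range_leftRegular :
    ∀ x ∈ insert 1 (Set.range hT.leftRegular), ∀ y ∈ insert 1 (Set.range hT.leftRegular),
      x * y ∈ insert 1 (Set.range hT.leftRegular) := by
  rintro _ (rfl | ⟨a, rfl⟩) y hy
  · rwa [one_mul]
  · obtain rfl | ⟨b, rfl⟩ := hy
    · exact .inr ⟨a, (mul_one _).symm⟩
    · exact .inr ⟨mul a b, hT.leftRegular_mul a b⟩

end IsTruss

end Trusses

theorem truss_unital_extension_general.{u} {T : Type u} (op : T → T → T → T) (mul : T → T → T)
    (hT : IsTruss op mul) :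
    ∃ (U : Type u) (opU : U → U → U → U) (mulU : U → U → U) (one : U),
      IsTruss opU mulU ∧
      (∀ u : U, mulU one u = u ∧ mulU u one = u) ∧
      ∃ j : T → U, Function.Injective j ∧
        (∀ a b c : T, j (op a b c) = opU (j a) (j b) (j c)) ∧
        (∀ a b : T, j (mul a b) = mulU (j a) (j b)) ∧
        one ∉ Set.range j ∧
        ∀ V : Set U, Set.range j ⊆ V → one ∈ V →
          (∀ a ∈ V, ∀ b ∈ V, ∀ c ∈ V, opU a b c ∈ V) → V = Set.univ := by
  let S := insert 1 (Set.range hT.leftRegular)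
  let opEnd := fun x y z : AddMonoid.End (HeapEnvelope op × ℤ) => x - y + z
  have hEnd : IsTruss opEnd (· * ·) := isTruss_of_nonUnitalRing _
  let U := {x // HeapClosure opEnd S x}
  let opU : U → U → U → U := fun x y z => ⟨opEnd x y z, .op_mem x.2 y.2 z.2⟩
  let mulU : U → U → U := fun x y =>
    ⟨x * y, .mul_mem hEnd hT.mul_mem_insert_one_range_leftRegular x.2 y.2⟩
  let one : U := ⟨1, .of_mem (.inl rfl)⟩
  let j : T → U := fun t => ⟨hT.leftRegular t, .of_mem (.inr ⟨t, rfl⟩)⟩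
  refine ⟨U, opU, mulU, one,
    hEnd.of_injective Subtype.val_injective (fun _ _ _ => rfl) (fun _ _ => rfl),
    fun u => ⟨Subtype.ext (one_mul u.1), Subtype.ext (mul_one u.1)⟩, j,
    fun a b hab => hT.leftRegular_injective (congrArg Subtype.val hab),
    fun a b c => Subtype.ext (hT.leftRegular_op a b c),
    fun a b => Subtype.ext (hT.leftRegular_mul a b), ?_, ?_⟩
  · rintro ⟨t, ht⟩
    exact hT.one_notMem_range_leftRegular ⟨t, congrArg Subtype.val ht⟩
  · intro V hj hone hV
    refine HeapClosure.eq_univ_of_closed ?_ hV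
    rintro _ (rfl | ⟨t, rfl⟩)
    exacts [hone, hj ⟨t, rfl⟩]

/-- Every truss `T` admits a unital extension: a unital truss
`U` with an injective map `j : T → U` preserving the ternary operation and the
multiplication, such that the identity `1` of `U` is not in the image of `j`
and `U` is generated as a heap by `j(T) ∪ {1}`. -/
theorem truss_unital_extension {T : Type} (op : T → T → T → T) (mul : T → T → T)
    (hT : IsTruss op mul) :
    ∃ (U : Type) (opU : U → U → U → U) (mulU : U → U → U) (one : U),
      IsTruss opU mulU ∧
      (∀ u : U, mulU one u = u ∧ mulU u one = u) ∧
      ∃ j : T → U, Function.Injective j ∧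
        (∀ a b c : T, j (op a b c) = opU (j a) (j b) (j c)) ∧
        (∀ a b : T, j (mul a b) = mulU (j a) (j b)) ∧
        one ∉ Set.range j ∧
        ∀ V : Set U, Set.range j ⊆ V → one ∈ V →
          (∀ a ∈ V, ∀ b ∈ V, ∀ c ∈ V, opU a b c ∈ V) → V = Set.univ :=
  truss_unital_extension_general op mul hT
end

section
/- For every truss T there exist a unital ring R and an injective map f : T → R satisfying f([t,t',t'']) = f(t) − f(t') + f(t'') and f(t t') = f(t) f(t') for all t,t',t'' ∈ T. (That is, every truss embeds into the truss T(R) associated to some unital ring R.) -/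
/-!
Adjoin an absorber to the truss, and then an identity. The first step is the free Abelian group on
`T` modulo the relations `a - b + c = [a, b, c]`: by distributivity they are stable under
multiplication, so the quotient is a ring. No two elements of `T` are identified in it: taking some
`e` as zero makes `T` an Abelian group with `[a, b, c] = a - b + c`, so the identity of `T` extends
to an additive map from the quotient back to `T`. The second step is the Dorroh extension.
-/

namespace IsAbelianHeap

variable {H : Type*} {op : H → H → H → H}

/-- The retract of an Abelian heap at `e`: the Abelian group with zero `e` and addition
`a + b = [a, e, b]`. It depends on `e`, so it is not an instance. -/
abbrev retract (h : IsAbelianHeap op) (e : H) : AddCommGroup H :=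
  letI : Zero H := ⟨e⟩
  letI : Add H := ⟨fun a b => op a e b⟩
  letI : Neg H := ⟨fun a => op e a e⟩
  have neg_add_cancel (a : H) : op (op e a e) e a = e := by rw [h.1.1, h.1.2.2, h.1.2.1]
  { AddGroup.ofLeftAxioms (fun a b c => h.1.1 a e b e c) (fun a => h.1.2.2 a e) neg_add_cancel with
    add_comm := fun a b => h.2 a e b }

theorem op_eq_sub_add (h : IsAbelianHeap op) (e a b c : H) :
    letI := h.retract e
    op a b c = a - b + c := by
  obtain ⟨⟨assoc, op_right, op_left⟩, -⟩ := h
  change op a b c = op (op a e (op e b e)) e c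
  rw [← assoc a e e b e, op_right a e, assoc a b e e c, op_left c e]

end IsAbelianHeap

universe u

section HeapRelations

open FreeAbelianGroup (of of_mul of_mul_of)

variable {T : Type u}

/-- The relations `a - b + c = [a, b, c]`. The quotient of the free Abelian group by them is the
universal Abelian group receiving a heap morphism from `T`. -/
def heapRelations (op : T → T → T → T) : AddSubgroup (FreeAbelianGroup T) :=
  .closure {x | ∃ a b c, of a - of b + of c - of (op a b c) = x}

variable {op : T → T → T → T}

theorem relator_mem_heapRelations (a b c : T) :
    of a - of b + of c - of (op a b c) ∈ heapRelations op :=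
  AddSubgroup.subset_closure ⟨a, b, c, rfl⟩

theorem IsAbelianHeap.eq_of_sub_mem_heapRelations (h : IsAbelianHeap op) {s t : T}
    (hst : of s - of t ∈ heapRelations op) : s = t := by
  let := h.retract s
  have relations_le_ker : heapRelations op ≤ (FreeAbelianGroup.lift (id : T → T)).ker := by
    rw [heapRelations, AddSubgroup.closure_le]
    rintro _ ⟨a, b, c, rfl⟩
    simp [h.op_eq_sub_add s]
  simpa [sub_eq_zero] using relations_le_ker hst

section Mul

variable [Mul T]

theorem mul_mem_heapRelations_left
    (mul_op : ∀ s a b c : T, s * op a b c = op (s * a) (s * b) (s * c))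
    (y : FreeAbelianGroup T) {x : FreeAbelianGroup T} (hx : x ∈ heapRelations op) :
    y * x ∈ heapRelations op := by
  induction y using FreeAbelianGroup.induction_on with
  | zero => simp
  | of s =>
    suffices heapRelations op ≤ (heapRelations op).comap (AddMonoidHom.mulLeft (of s)) from this hx
    refine (AddSubgroup.closure_le _).2 ?_
    rintro _ ⟨a, b, c, rfl⟩
    simpa [mul_add, mul_sub, of_mul_of, mul_op] using
      relator_mem_heapRelations (op := op) (s * a) (s * b) (s * c)
  | neg s hs => simpa using hs
  | add y z hy hz => simpa [add_mul] using add_mem hy hz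

theorem mul_mem_heapRelations_right
    (op_mul : ∀ s a b c : T, op a b c * s = op (a * s) (b * s) (c * s))
    (y : FreeAbelianGroup T) {x : FreeAbelianGroup T} (hx : x ∈ heapRelations op) :
    x * y ∈ heapRelations op := by
  induction y using FreeAbelianGroup.induction_on with
  | zero => simp
  | of s =>
    suffices heapRelations op ≤ (heapRelations op).comap (AddMonoidHom.mulRight (of s)) from this hx
    refine (AddSubgroup.closure_le _).2 ?_
    rintro _ ⟨a, b, c, rfl⟩
    simpa [add_mul, sub_mul, of_mul_of, op_mul] using
      relator_mem_heapRelations (op := op) (a * s) (b * s) (c * s)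
  | neg s hs => simpa using hs
  | add y z hy hz => simpa [mul_add] using add_mem hy hz

variable (mul_op : ∀ s a b c : T, s * op a b c = op (s * a) (s * b) (s * c))
  (op_mul : ∀ s a b c : T, op a b c * s = op (a * s) (b * s) (c * s))

/-- The additive relations `heapRelations op` as a two-sided ideal. For a truss, the quotient by it
is the ring obtained by adjoining an absorber. -/
def heapIdeal : TwoSidedIdeal (FreeAbelianGroup T) :=
  .mk' (heapRelations op) (zero_mem _) add_mem neg_mem
    (mul_mem_heapRelations_left mul_op _) (mul_mem_heapRelations_right op_mul _)

theorem heapIdeal_ringCon_iff (x y : FreeAbelianGroup T) :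
    (heapIdeal mul_op op_mul).ringCon x y ↔ x - y ∈ heapRelations op := by
  rw [TwoSidedIdeal.rel_iff, heapIdeal, TwoSidedIdeal.mem_mk', SetLike.mem_coe]

end Mul

theorem IsTruss.exists_nonUnitalRing_embedding {mul : T → T → T} (hT : IsTruss op mul) :
    ∃ (A : Type u) (_ : NonUnitalRing A) (f : T → A), Function.Injective f ∧
      (∀ a b c : T, f (op a b c) = f a - f b + f c) ∧
      (∀ a b : T, f (mul a b) = f a * f b) := by
  obtain ⟨heap, mul_assoc, mul_op, op_mul⟩ := hT
  let : Semigroup T := { mul, mul_assoc }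
  let I : TwoSidedIdeal (FreeAbelianGroup T) := heapIdeal mul_op op_mul
  have coe_eq_iff (x y : FreeAbelianGroup T) :
      (x : I.ringCon.Quotient) = y ↔ x - y ∈ heapRelations op :=
    (RingCon.eq _).trans (heapIdeal_ringCon_iff mul_op op_mul x y)
  refine ⟨I.ringCon.Quotient, inferInstance, fun t => (of t : FreeAbelianGroup T), ?_, ?_, ?_⟩
  · exact fun s t hst => heap.eq_of_sub_mem_heapRelations ((coe_eq_iff _ _).1 hst)
  · exact fun a b c => ((coe_eq_iff _ _).2 (relator_mem_heapRelations a b c)).symm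
  · exact fun a b => congrArg _ (of_mul a b)

end HeapRelations

theorem truss_embeds_into_ring_general {T : Type u} (op : T → T → T → T) (mul : T → T → T)
    (hT : IsTruss op mul) :
    ∃ (R : Type u) (_ : Ring R) (f : T → R), Function.Injective f ∧
      (∀ a b c : T, f (op a b c) = f a - f b + f c) ∧
      (∀ a b : T, f (mul a b) = f a * f b) := by
  obtain ⟨A, _, f, f_injective, f_op, f_mul⟩ := hT.exists_nonUnitalRing_embedding
  refine ⟨Unitization ℤ A, inferInstance, fun t => f t, ?_, ?_, ?_⟩
  · exact Unitization.inr_injective.comp f_injective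
  · exact fun a b c => by simp only [f_op, Unitization.inr_add, Unitization.inr_sub]
  · exact fun a b => by simp only [f_mul, Unitization.inr_mul]

/-- Every truss embeds into the truss associated to some
unital ring: there exist a unital ring `R` and an injective `f : T → R` with
`f([t,t',t'']) = f(t) - f(t') + f(t'')` and `f(t t') = f(t) f(t')`. -/
theorem truss_embeds_into_ring {T : Type} (op : T → T → T → T) (mul : T → T → T)
    (hT : IsTruss op mul) :
    ∃ (R : Type) (_ : Ring R) (f : T → R), Function.Injective f ∧
      (∀ a b c : T, f (op a b c) = f a - f b + f c) ∧
      (∀ a b : T, f (mul a b) = f a * f b) :=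
  truss_embeds_into_ring_general op mul hT
end

section
/- Let R be a unital ring and M a unital module over the truss T(R) possessing exactly one absorber e. Then M becomes a unital left R-module with addition a + b := [a, e, b], zero element e, negation −a := [e, a, e], and scalar multiplication the given action; moreover in this R-module [a,b,c] = a − b + c for all a,b,c ∈ M. -/
/-- `(M, op, sm)` is a unital module over the truss `T(R)` associated to the
ring `R`: `M` is an Abelian heap and the action `sm` satisfies
`r·(s·m) = (rs)·m`, `(r - s + t)·m = [r·m, s·m, t·m]`,
`r·[m,m',m''] = [r·m, r·m', r·m'']` and `1·m = m`. -/
def IsTRMod {R M : Type*} [Ring R] (op : M → M → M → M) (sm : R → M → M) : Prop :=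
  IsAbelianHeap op ∧
  (∀ (r s : R) (m : M), sm r (sm s m) = sm (r * s) m) ∧
  (∀ (r s t : R) (m : M), sm (r - s + t) m = op (sm r m) (sm s m) (sm t m)) ∧
  (∀ (r : R) (m m' m'' : M), sm r (op m m' m'') = op (sm r m) (sm r m') (sm r m'')) ∧
  (∀ m : M, sm (1 : R) m = m)

/-!
For every `m` in a `T(R)`-module, `0 · m` is an absorber, so if `e` is the only absorber then
`0 · m = e` for all `m`. The middle terms of `(r - 0 + s) · m = [r · m, 0 · m, s · m]` and of
`r · [a, e, b] = [r · a, r · e, r · b]` are then both `e`, which makes the action distributive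
over the group obtained from the heap by choosing `e` as its neutral element.
-/

namespace IsHeap

variable {H : Type*} {op : H → H → H → H}

/-- The retract of a heap at `e`: the group with neutral element `e` and sum `[a, e, b]`,
written additively although it need not be commutative. -/
abbrev retractAddGroup (h : IsHeap op) (e : H) : AddGroup H :=
  letI : Add H := ⟨fun a b => op a e b⟩
  letI : Zero H := ⟨e⟩
  letI : Neg H := ⟨fun a => op e a e⟩
  AddGroup.ofLeftAxioms (fun a b c => h.1 a e b e c) (fun a => h.2.2 a e) fun a =>
    show op (op e a e) e a = e by rw [h.1, h.2.2, h.2.1]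

theorem retract_sub_add (h : IsHeap op) (e a b c : H) :
    letI := h.retractAddGroup e
    a - b + c = op a b c := by
  let _ : AddGroup H := h.retractAddGroup e
  have ⟨assoc, op_right_self, op_left_self⟩ := h
  calc
    a - b + c = a + -b + c := by rw [sub_eq_add_neg]
    _ = op (op a e (op e b e)) e c := rfl
    _ = op (op a e e) b (op e e c) := by simp only [assoc]
    _ = op a b c := by rw [op_right_self, op_left_self]

end IsHeap

/-- The retract of an Abelian heap at `e`, as a commutative group. -/
abbrev IsAbelianHeap.retractAddCommGroup {H : Type*} {op : H → H → H → H}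
    (h : IsAbelianHeap op) (e : H) : AddCommGroup H where
  __ := h.1.retractAddGroup e
  add_comm a b := h.2 a e b

namespace IsTRMod

variable {R M : Type*} [Ring R] {op : M → M → M → M} {sm : R → M → M}

theorem sm_sm_zero (hM : IsTRMod op sm) (r : R) (m : M) : sm r (sm 0 m) = sm 0 m := by
  have ⟨_, sm_sm, _⟩ := hM
  rw [sm_sm, mul_zero]

theorem add_sm (hM : IsTRMod op sm) (r s : R) (m : M) :
    sm (r + s) m = op (sm r m) (sm 0 m) (sm s m) := by
  have ⟨_, _, sub_add_sm, _⟩ := hM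
  simpa only [sub_zero] using sub_add_sm r 0 s m

theorem sm_op_zero_sm (hM : IsTRMod op sm) (r : R) (a m b : M) :
    sm r (op a (sm 0 m) b) = op (sm r a) (sm 0 m) (sm r b) := by
  have ⟨_, _, _, sm_op, _⟩ := hM
  rw [sm_op, hM.sm_sm_zero]

/-- The `R`-module structure on the retract at `e` of a `T(R)`-module in which `0` acts as the
constant map `e`. -/
abbrev retractModule (hM : IsTRMod op sm) {e : M} (zero_sm : ∀ m, sm 0 m = e) :
    letI := hM.1.retractAddCommGroup e
    Module R M :=
  letI := hM.1.retractAddCommGroup e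
  { smul := sm
    one_smul := hM.2.2.2.2
    mul_smul := fun r s m => (hM.2.1 r s m).symm
    smul_zero := fun r => show sm r e = e from zero_sm e ▸ hM.sm_sm_zero r e
    zero_smul := zero_sm
    smul_add := fun r a b => show sm r (op a e b) = op (sm r a) e (sm r b) by
      simpa only [zero_sm] using hM.sm_op_zero_sm r a e b
    add_smul := fun r s m => show sm (r + s) m = op (sm r m) e (sm s m) by
      rw [hM.add_sm, zero_sm] }

end IsTRMod

theorem module_from_unique_absorber_general {R M : Type*} [Ring R]
    (op : M → M → M → M) (sm : R → M → M) (hM : IsTRMod op sm) (e : M)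
    (huniq : ∀ e' : M, (∀ r : R, sm r e' = e') → e' = e) :
    ∃ (_ : AddCommGroup M) (_ : Module R M),
      (∀ a b : M, a + b = op a e b) ∧
      ((0 : M) = e) ∧
      (∀ a : M, -a = op e a e) ∧
      (∀ (r : R) (m : M), r • m = sm r m) ∧
      (∀ a b c : M, op a b c = a - b + c) := by
  have zero_sm (m : M) : sm 0 m = e := huniq _ fun r => hM.sm_sm_zero r m
  exact ⟨hM.1.retractAddCommGroup e, hM.retractModule zero_sm, fun _ _ => rfl, rfl,
    fun _ => rfl, fun _ _ => rfl, fun a b c => (hM.1.1.retract_sub_add e a b c).symm⟩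

/-- Let `R` be a unital ring and `M` a unital module over the
truss `T(R)` with exactly one absorber `e`.  Then `M` becomes a unital left
`R`-module with `a + b = [a,e,b]`, zero `e`, `-a = [e,a,e]` and scalar action
the given one; moreover in this `R`-module `[a,b,c] = a - b + c`. -/
theorem module_from_unique_absorber {R M : Type} [Ring R]
    (op : M → M → M → M) (sm : R → M → M) (hM : IsTRMod op sm) (e : M)
    (habs : ∀ r : R, sm r e = e)
    (huniq : ∀ e' : M, (∀ r : R, sm r e' = e') → e' = e) :
    ∃ (_ : AddCommGroup M) (_ : Module R M),
      (∀ a b : M, a + b = op a e b) ∧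
      ((0 : M) = e) ∧
      (∀ a : M, -a = op e a e) ∧
      (∀ (r : R) (m : M), r • m = sm r m) ∧
      (∀ a b c : M, op a b c = a - b + c) :=
  module_from_unique_absorber_general op sm hM e huniq
end

section
/- Let R be a unital ring, X a nonempty set, and let (C, (ι_x)_{x∈X}) be a coproduct in the category of unital T(R)-modules of the family consisting of a copy of T(R) for each x ∈ X. Then for a unital left R-module N, the module T(N) is isomorphic to C as a T(R)-module if and only if X is a singleton and N is isomorphic to R as a left R-module. In particular, if X has at least two elements, then C is not isomorphic to T(N) for any R-module N. -/
/-- A morphism of modules over the truss `T(R)`: a map preserving both the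
ternary heap operation and the `R`-action. -/
def IsTRModHom {R M N : Type*} [Ring R] (opM : M → M → M → M) (smM : R → M → M)
    (opN : N → N → N → N) (smN : R → N → N) (f : M → N) : Prop :=
  (∀ a b c : M, f (opM a b c) = opN (f a) (f b) (f c)) ∧
  (∀ (r : R) (m : M), f (smM r m) = smN r (f m))

/-!
The element `0 • m` separates the two kinds of modules. In `T(N)` it does not depend on `m`, whereas
in a coproduct of nonempty modules it remembers the component of `m`: mapping each component to
its own point of a group on which `R` acts trivially shows that different components stay disjoint.
Hence a coproduct of the form `T(N)` has a single component, to which it is isomorphic, and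
morphisms `T(N) → T(M)` are just linear maps, because they commute with the action of `0`.
-/

universe u v w

/-- The heap operation `[a, b, c] = a - b + c` of an additive group `A`. Together with the scalar
action it makes a module `N` into `T(N)`. -/
abbrev heapOp (A : Type*) [AddGroup A] : A → A → A → A := fun a b c => a - b + c

theorem isAbelianHeap_heapOp (A : Type*) [AddCommGroup A] : IsAbelianHeap (heapOp A) :=
  ⟨⟨fun a b c d e => by dsimp only [heapOp]; abel, sub_add_cancel,
    fun a b => by simp⟩, fun a b c => by dsimp only [heapOp]; abel⟩

section Modules

variable {R : Type*} [Ring R]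

theorem isTRMod_smul (N : Type*) [AddCommGroup N] [Module R N] :
    IsTRMod (heapOp N) (fun (r : R) n => r • n) :=
  ⟨isAbelianHeap_heapOp N, fun r s n => smul_smul r s n,
    fun r s t n => by simp only [add_smul, sub_smul],
    fun r a b c => by simp only [smul_add, smul_sub], one_smul R⟩

theorem isTRMod_trivialAction (A : Type*) [AddCommGroup A] :
    IsTRMod (heapOp A) (fun (_ : R) a => a) :=
  ⟨isAbelianHeap_heapOp A, fun _ _ _ => rfl, fun _ _ _ a => by simp, fun _ _ _ _ => rfl,
    fun _ => rfl⟩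

end Modules

namespace IsTRModHom

variable {R M N P : Type*} [Ring R] {opM : M → M → M → M} {smM : R → M → M}
  {opN : N → N → N → N} {smN : R → N → N} {opP : P → P → P → P} {smP : R → P → P}

protected theorem id : IsTRModHom opM smM opM smM id :=
  ⟨fun _ _ _ => rfl, fun _ _ => rfl⟩

protected theorem comp {g : N → P} {f : M → N} (hg : IsTRModHom opN smN opP smP g)
    (hf : IsTRModHom opM smM opN smN f) : IsTRModHom opM smM opP smP (g ∘ f) :=
  ⟨fun a b c => by simp only [Function.comp_apply, hf.1, hg.1],
    fun r m => by simp only [Function.comp_apply, hf.2, hg.2]⟩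

protected theorem symm {e : M ≃ N} (he : IsTRModHom opM smM opN smN e) :
    IsTRModHom opN smN opM smM e.symm :=
  ⟨fun a b c => by simp only [e.symm_apply_eq, he.1, e.apply_symm_apply],
    fun r n => by simp only [e.symm_apply_eq, he.2, e.apply_symm_apply]⟩

theorem const_trivialAction {A : Type*} [AddGroup A] (a : A) :
    IsTRModHom opM smM (heapOp A) (fun (_ : R) a => a) (fun _ => a) :=
  ⟨fun _ _ _ => (sub_add_cancel a a).symm, fun _ _ => rfl⟩

end IsTRModHom

section Linear

variable {R M N : Type*} [Ring R] [AddCommGroup M] [Module R M] [AddCommGroup N] [Module R N]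

theorem isTRModHom_smul_iff_exists_linearMap {f : N → M} :
    IsTRModHom (heapOp N) (fun (r : R) n => r • n) (heapOp M) (fun (r : R) m => r • m) f ↔
      ∃ l : N →ₗ[R] M, ⇑l = f := by
  constructor
  · rintro ⟨map_heapOp, map_smul⟩
    have map_zero : f 0 = 0 := by simpa using map_smul 0 0
    have map_add (a b : N) : f (a + b) = f a + f b := by
      simpa [heapOp, map_zero] using map_heapOp a 0 b
    exact ⟨{ toFun := f, map_add' := map_add, map_smul' := map_smul }, rfl⟩
  · rintro ⟨l, rfl⟩
    exact ⟨fun a b c => by simp only [map_add, map_sub], l.map_smul⟩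

theorem IsTRModHom.zero_action_eq_map_zero {C : Type*} {opC : C → C → C → C} {smC : R → C → C}
    {f : N → C} (hf : IsTRModHom (heapOp N) (fun (r : R) n => r • n) opC smC f)
    (hsurj : Function.Surjective f) (c : C) : smC 0 c = f 0 := by
  obtain ⟨n, rfl⟩ := hsurj c
  exact (hf.2 0 n).symm.trans (congrArg f (zero_smul R n))

end Linear

/-- `C` with the inclusions `ι x` is a coproduct of the family `M` in the category of unital
`T(R)`-modules whose carriers lie in the universe of `C`. The members of `M` are only assumed to
carry the operations of a module, not the axioms. -/
structure IsTRModCoproduct {R : Type u} [Ring R] {X : Type v} {M : X → Type w}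
    (opM : ∀ x, M x → M x → M x → M x) (smM : ∀ x, R → M x → M x)
    {C : Type w} (opC : C → C → C → C) (smC : R → C → C) (ι : ∀ x, M x → C) : Prop where
  isTRMod : IsTRMod opC smC
  isTRModHom_inclusion (x : X) : IsTRModHom (opM x) (smM x) opC smC (ι x)
  existsUnique_desc (H : Type w) (opH : H → H → H → H) (smH : R → H → H) :
    IsTRMod opH smH → ∀ φ : ∀ x, M x → H, (∀ x, IsTRModHom (opM x) (smM x) opH smH (φ x)) →
      ∃! ξ : C → H, IsTRModHom opC smC opH smH ξ ∧ ∀ x, ξ ∘ ι x = φ x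

namespace IsTRModCoproduct

variable {R : Type u} [Ring R] {X : Type v} {M : X → Type w}
  {opM : ∀ x, M x → M x → M x → M x} {smM : ∀ x, R → M x → M x}
  {C : Type w} {opC : C → C → C → C} {smC : R → C → C} {ι : ∀ x, M x → C}

theorem hom_ext (hC : IsTRModCoproduct opM smM opC smC ι) {H : Type w} {opH : H → H → H → H}
    {smH : R → H → H} (hH : IsTRMod opH smH) {ξ η : C → H} (hξ : IsTRModHom opC smC opH smH ξ)
    (hη : IsTRModHom opC smC opH smH η) (h : ∀ x, ξ ∘ ι x = η ∘ ι x) : ξ = η :=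
  (hC.existsUnique_desc H opH smH hH (fun x => η ∘ ι x)
    fun x => hη.comp (hC.isTRModHom_inclusion x)).unique ⟨hξ, h⟩ ⟨hη, fun _ => rfl⟩

theorem nonempty_index (hC : IsTRModCoproduct opM smM opC smC ι) [Nonempty C] : Nonempty X := by
  by_contra hX
  rw [not_nonempty_iff] at hX
  have hEmpty : IsTRMod (fun a _ _ : PEmpty.{w + 1} => a) (fun (_ : R) a => a) :=
    ⟨⟨⟨nofun, nofun, nofun⟩, nofun⟩, fun _ _ => nofun, fun _ _ _ => nofun, fun _ => nofun, nofun⟩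
  obtain ⟨ξ, -, -⟩ := hC.existsUnique_desc PEmpty _ _ hEmpty isEmptyElim isEmptyElim
  exact (ξ (Classical.arbitrary C)).elim

theorem index_eq_of_inclusion_eq (hC : IsTRModCoproduct opM smM opC smC ι) {x y : X} {m : M x}
    {m' : M y} (h : ι x m = ι y m') : x = y := by
  classical
  obtain ⟨ξ, ⟨-, hξ⟩, -⟩ := hC.existsUnique_desc (ULift ℤ) _ _ (isTRMod_trivialAction _)
    (fun z _ => if z = x then 0 else 1) (fun _ => IsTRModHom.const_trivialAction _)
  have component_eq : (0 : ULift ℤ) = if y = x then 0 else 1 :=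
    calc (0 : ULift ℤ) = if x = x then 0 else 1 := (if_pos rfl).symm
      _ = ξ (ι x m) := (congrFun (hξ x) m).symm
      _ = ξ (ι y m') := congrArg ξ h
      _ = if y = x then 0 else 1 := congrFun (hξ y) m'
  by_contra hxy
  exact zero_ne_one (component_eq.trans (if_neg (Ne.symm hxy)))

theorem inclusion_bijective [Subsingleton X] (hC : IsTRModCoproduct opM smM opC smC ι) {x : X}
    (hM : IsTRMod (opM x) (smM x)) : Function.Bijective (ι x) := by
  obtain ⟨φ, φ_self, hφ, ι_comp_φ⟩ : ∃ φ : ∀ y, M y → M x, φ x = id ∧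
      (∀ y, IsTRModHom (opM y) (smM y) (opM x) (smM x) (φ y)) ∧ ∀ y, ι x ∘ φ y = ι y := by
    refine ⟨fun y => cast (congrArg M (Subsingleton.elim y x)), rfl, fun y => ?_, fun y => ?_⟩
    · obtain rfl := Subsingleton.elim x y
      exact IsTRModHom.id
    · obtain rfl := Subsingleton.elim x y
      rfl
  obtain ⟨ξ, ⟨hξ, ξ_comp_ι⟩, -⟩ := hC.existsUnique_desc (M x) _ _ hM φ hφ
  have ι_comp_ξ : ι x ∘ ξ = id :=
    hC.hom_ext hC.isTRMod ((hC.isTRModHom_inclusion x).comp hξ) IsTRModHom.id fun y => by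
      rw [Function.comp_assoc, ξ_comp_ι, ι_comp_φ, Function.id_comp]
  exact Function.bijective_iff_has_inverse.2
    ⟨ξ, congrFun ((ξ_comp_ι x).trans φ_self), congrFun ι_comp_ξ⟩

theorem subsingleton_index_of_surjective [∀ x, Nonempty (M x)]
    (hC : IsTRModCoproduct opM smM opC smC ι) {N : Type*} [AddCommGroup N] [Module R N] {f : N → C}
    (hf : IsTRModHom (heapOp N) (fun (r : R) n => r • n) opC smC f)
    (hsurj : Function.Surjective f) : Subsingleton X := by
  have inclusion_eq_map_zero (x : X) (m : M x) : ι x (smM x 0 m) = f 0 := by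
    rw [(hC.isTRModHom_inclusion x).2, hf.zero_action_eq_map_zero hsurj]
  refine ⟨fun x y => ?_⟩
  obtain ⟨m⟩ := ‹∀ x, Nonempty (M x)› x
  obtain ⟨m'⟩ := ‹∀ x, Nonempty (M x)› y
  exact hC.index_eq_of_inclusion_eq
    ((inclusion_eq_map_zero x m).trans (inclusion_eq_map_zero y m').symm)

end IsTRModCoproduct

theorem free_truss_module_iso_TN_iff_general {R : Type u} [Ring R] {X : Type v} {M : X → Type w}
    [∀ x, AddCommGroup (M x)] [∀ x, Module R (M x)] {C : Type w} {opC : C → C → C → C}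
    {smC : R → C → C} {ι : ∀ x, M x → C}
    (hC : IsTRModCoproduct (fun x => heapOp (M x)) (fun _ r m => r • m) opC smC ι)
    (N : Type*) [AddCommGroup N] [Module R N] :
    (∃ f : N → C, Function.Bijective f ∧
        IsTRModHom (heapOp N) (fun (r : R) n => r • n) opC smC f) ↔
      ∃ x, (∀ y, y = x) ∧ Nonempty (N ≃ₗ[R] M x) := by
  constructor
  · rintro ⟨f, hf_bij, hf⟩
    have : Nonempty C := ⟨f 0⟩
    have : Subsingleton X := hC.subsingleton_index_of_surjective hf hf_bij.surjective
    obtain ⟨x⟩ := hC.nonempty_index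
    let e : M x ≃ C := Equiv.ofBijective (ι x) (hC.inclusion_bijective (isTRMod_smul _))
    have he : IsTRModHom _ _ opC smC e := hC.isTRModHom_inclusion x
    obtain ⟨l, hl⟩ := isTRModHom_smul_iff_exists_linearMap.1 (he.symm.comp hf)
    have hl_bij : Function.Bijective l := hl ▸ e.symm.bijective.comp hf_bij
    exact ⟨x, fun y => Subsingleton.elim y x, ⟨LinearEquiv.ofBijective l hl_bij⟩⟩
  · rintro ⟨x, hx, ⟨e⟩⟩
    have : Subsingleton X := subsingleton_of_forall_eq x hx
    exact ⟨ι x ∘ e, (hC.inclusion_bijective (isTRMod_smul _)).comp e.bijective,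
      (hC.isTRModHom_inclusion x).comp (isTRModHom_smul_iff_exists_linearMap.2 ⟨e, rfl⟩)⟩

/-- Let `R` be a unital ring, `X` a nonempty set and
`(C, (ι_x)_{x∈X})` a coproduct in the category of unital `T(R)`-modules of an
`X`-indexed family of copies of `T(R)` (here `T(R)` is the `T(R)`-module `R`
with `[a,b,c] = a - b + c` and action `r·a = ra`).  Then for a unital left
`R`-module `N`, the `T(R)`-module `T(N)` is isomorphic to `C` if and only if
`X` is a singleton and `N ≅ R` as left `R`-modules. -/
theorem free_truss_module_iso_TN_iff {R : Type} [Ring R] {X : Type}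
    (hX : Nonempty X) {C : Type} (opC : C → C → C → C) (smC : R → C → C)
    (hC : IsTRMod opC smC) (ι : X → R → C)
    (hι : ∀ x : X, IsTRModHom (fun a b c : R => a - b + c)
      (fun r a : R => r * a) opC smC (ι x))
    (huniv : ∀ (H : Type) (opH : H → H → H → H) (smH : R → H → H),
      IsTRMod opH smH → ∀ φ : X → R → H,
        (∀ x : X, IsTRModHom (fun a b c : R => a - b + c)
          (fun r a : R => r * a) opH smH (φ x)) →
        ∃! ξ : C → H, IsTRModHom opC smC opH smH ξ ∧ ∀ x : X, ξ ∘ ι x = φ x)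
    (N : Type) [AddCommGroup N] [Module R N] :
    (∃ f : N → C, Function.Bijective f ∧
        IsTRModHom (fun x y z : N => x - y + z) (fun (r : R) (x : N) => r • x)
          opC smC f) ↔
      (Subsingleton X ∧ Nonempty (N ≃ₗ[R] R)) := by
  obtain ⟨x⟩ := hX
  exact (free_truss_module_iso_TN_iff_general (M := fun _ : X => R) ⟨hC, hι, huniv⟩ N).trans
    ⟨fun ⟨y, hy, e⟩ => ⟨subsingleton_of_forall_eq y hy, e⟩,
      fun ⟨h, e⟩ => ⟨x, fun y => h.elim y x, e⟩⟩
end
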